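/- Let p be a prime and let σ ∈ ℤ_p be p-adically non-Liouville, with σ either 0 or not a rational integer (so j + σ ≠ 0 for every integer j ≥ 1). Then for every real ζ > p^{1/(p−1)} there exists C > 0 such that |∏_{j=1}^l (j + σ)|_p^{−1} ≤ C·ζ^l for all l ∈ ℕ. -/

import Mathlib

/-- `a ∈ ℤ_p` is `p`-adically non-Liouville: for every `δ > 1` there is `C > 0` with
`‖a + s‖⁻¹ ≤ C δ^{|s|}` for every integer `s` with `a + s ≠ 0`. -/
def IsPAdicNonLiouville {p : ℕ} [Fact p.Prime] (a : ℤ_[p]) : Prop :=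
  ∀ δ : ℝ, 1 < δ → ∃ C : ℝ, 0 < C ∧
    ∀ s : ℤ, (a : ℚ_[p]) + (s : ℚ_[p]) ≠ 0 → ‖(a : ℚ_[p]) + (s : ℚ_[p])‖⁻¹ ≤ C * δ ^ s.natAbs

/-!
The reciprocal of `x (x + 1) ⋯ (x + n)` is, up to the factor `± n!`, the `n`-th finite difference of
`x ↦ x⁻¹`. Over an ultrametric field differences do not increase norms, so
`‖x (x + 1) ⋯ (x + n)‖⁻¹ ≤ ‖n!‖⁻¹ max_{i ≤ n} ‖x + i‖⁻¹`. With `x = σ + 1`, the non-Liouville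
condition makes the maximum subexponential in `n`, and Legendre's formula gives
`‖n!‖⁻¹ ≤ p ^ (n / (p - 1))`.
-/

theorem factorial_succ_div_prod_range_eq_sub {K : Type*} [Field K] {x : K} {n : ℕ}
    (hx : ∀ i ≤ n + 1, x + i ≠ 0) :
    ((n + 1).factorial : K) / ∏ i ∈ Finset.range (n + 2), (x + i) =
      n.factorial / ∏ i ∈ Finset.range (n + 1), (x + i) -
        n.factorial / ∏ i ∈ Finset.range (n + 1), (x + 1 + i) := by
  have hfirst : x ≠ 0 := by simpa using hx 0 (Nat.zero_le _)
  have hlast : x + 1 + n ≠ 0 := by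
    simpa [add_assoc, add_comm (1 : K)] using hx (n + 1) le_rfl
  have hmid : ∏ i ∈ Finset.range n, (x + 1 + i) ≠ 0 :=
    Finset.prod_ne_zero_iff.2 fun i hi => by
      simpa [add_assoc, add_comm (1 : K)] using hx (i + 1) (by grind)
  have peel_first (m : ℕ) : ∏ i ∈ Finset.range (m + 1), (x + i) =
      x * ∏ i ∈ Finset.range m, (x + 1 + i) := by
    simp [Finset.prod_range_succ', mul_comm, add_assoc, add_comm (1 : K)]
  rw [peel_first, peel_first, Finset.prod_range_succ, Nat.factorial_succ]
  push_cast
  field_simp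
  ring

theorem norm_factorial_div_prod_range_add_le {K : Type*} [NormedField K] [IsUltrametricDist K]
    {x : K} {n : ℕ} {M : ℝ} (hx : ∀ i ≤ n, x + i ≠ 0) (hM : ∀ i ≤ n, ‖x + i‖⁻¹ ≤ M) :
    ‖(n.factorial : K) / ∏ i ∈ Finset.range (n + 1), (x + i)‖ ≤ M := by
  induction n generalizing x with
  | zero => simpa using hM 0 le_rfl
  | succ n ih =>
    have shift (i : ℕ) : x + 1 + i = x + (i + 1 : ℕ) := by push_cast; ring
    have hleft : ‖(n.factorial : K) / ∏ i ∈ Finset.range (n + 1), (x + i)‖ ≤ M :=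
      ih (fun i hi => hx i (by lia)) fun i hi => hM i (by lia)
    have hright : ‖(n.factorial : K) / ∏ i ∈ Finset.range (n + 1), (x + 1 + i)‖ ≤ M :=
      ih (fun i hi => shift i ▸ hx (i + 1) (by lia)) fun i hi => shift i ▸ hM (i + 1) (by lia)
    rw [factorial_succ_div_prod_range_eq_sub hx, sub_eq_add_neg]
    exact (IsUltrametricDist.norm_add_le_max _ _).trans
      (max_le hleft ((norm_neg _).trans_le hright))

theorem padicValNat_factorial_le_div (p : ℕ) [hp : Fact p.Prime] (n : ℕ) :
    (padicValNat p n.factorial : ℝ) ≤ n / ((p : ℝ) - 1) := by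
  have hp1 : (1 : ℝ) < p := mod_cast hp.out.one_lt
  have legendre : (p - 1) * padicValNat p n.factorial ≤ n :=
    (sub_one_mul_padicValNat_factorial n).trans_le (Nat.sub_le _ _)
  rw [le_div_iff₀' (sub_pos.2 hp1), ← Nat.cast_pred hp.out.pos]
  exact_mod_cast legendre

theorem inv_norm_padic_factorial_le (p : ℕ) [hp : Fact p.Prime] (n : ℕ) :
    ‖(n.factorial : ℚ_[p])‖⁻¹ ≤ ((p : ℝ) ^ ((1 : ℝ) / ((p : ℝ) - 1))) ^ n := by
  have hp1 : (1 : ℝ) < p := mod_cast hp.out.one_lt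
  have hn : (n.factorial : ℚ_[p]) ≠ 0 := mod_cast n.factorial_ne_zero
  calc ‖(n.factorial : ℚ_[p])‖⁻¹ = (p : ℝ) ^ (padicValNat p n.factorial : ℝ) := by
        rw [Padic.norm_eq_zpow_neg_valuation hn, Padic.valuation_natCast, zpow_neg, inv_inv,
          zpow_natCast, Real.rpow_natCast]
    _ ≤ (p : ℝ) ^ ((n : ℝ) / ((p : ℝ) - 1)) :=
        Real.rpow_le_rpow_of_exponent_le hp1.le (padicValNat_factorial_le_div p n)
    _ = ((p : ℝ) ^ ((1 : ℝ) / ((p : ℝ) - 1))) ^ n := by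
        rw [← Real.rpow_mul_natCast (Nat.cast_nonneg p), one_div_mul_eq_div]

theorem inv_norm_prod_Icc_natCast_add_le {p : ℕ} [Fact p.Prime] {K : Type*} [NormedField K]
    [NormedAlgebra ℚ_[p] K] {σ : K} {n : ℕ} {M : ℝ}
    (hσ : ∀ j ∈ Finset.Icc 1 (n + 1), (j : K) + σ ≠ 0)
    (hM : ∀ j ∈ Finset.Icc 1 (n + 1), ‖(j : K) + σ‖⁻¹ ≤ M) :
    ‖∏ j ∈ Finset.Icc 1 (n + 1), ((j : K) + σ)‖⁻¹ ≤
      M * ((p : ℝ) ^ ((1 : ℝ) / ((p : ℝ) - 1))) ^ n := by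
  have : IsUltrametricDist K := .of_normedAlgebra ℚ_[p]
  have shift (i : ℕ) : 1 + σ + i = (1 + i : ℕ) + σ := by push_cast; ring
  have hprod : ∏ j ∈ Finset.Icc 1 (n + 1), ((j : K) + σ) =
      ∏ i ∈ Finset.range (n + 1), (1 + σ + i) := by
    simp only [shift, ← Finset.Ico_add_one_right_eq_Icc, Finset.prod_Ico_eq_prod_range,
      Nat.add_sub_cancel]
  have hnorm : ‖(n.factorial : K)‖ = ‖(n.factorial : ℚ_[p])‖ := by
    rw [← map_natCast (algebraMap ℚ_[p] K), norm_algebraMap']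
  have hfac : (0 : ℝ) < ‖(n.factorial : ℚ_[p])‖ :=
    norm_pos_iff.2 (mod_cast n.factorial_ne_zero)
  have hquot : ‖(n.factorial : K) / ∏ j ∈ Finset.Icc 1 (n + 1), ((j : K) + σ)‖ ≤ M := by
    rw [hprod]
    exact norm_factorial_div_prod_range_add_le
      (fun i hi => shift i ▸ hσ (1 + i) (by grind)) fun i hi => shift i ▸ hM (1 + i) (by grind)
  have hM0 : 0 ≤ M := (norm_nonneg _).trans hquot
  calc ‖∏ j ∈ Finset.Icc 1 (n + 1), ((j : K) + σ)‖⁻¹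
      = ‖(n.factorial : K) / ∏ j ∈ Finset.Icc 1 (n + 1), ((j : K) + σ)‖ *
          ‖(n.factorial : ℚ_[p])‖⁻¹ := by
        rw [norm_div, hnorm]
        field_simp
    _ ≤ M * ((p : ℝ) ^ ((1 : ℝ) / ((p : ℝ) - 1))) ^ n := by
        gcongr
        exact inv_norm_padic_factorial_le p n

theorem natCast_add_ne_zero_of_eq_zero_or_forall_ne_intCast {K : Type*}
    [AddGroupWithOne K] [CharZero K] {σ : K} (hσ : σ = 0 ∨ ∀ i : ℤ, σ ≠ i) {j : ℕ} (hj : 1 ≤ j) :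
    (j : K) + σ ≠ 0 := by
  rcases hσ with rfl | hσ
  · simpa using Nat.one_le_iff_ne_zero.1 hj
  · intro h
    exact hσ (-j) (by simpa using eq_neg_of_add_eq_zero_right h)

theorem IsPAdicNonLiouville.exists_inv_norm_natCast_add_le {p : ℕ} [Fact p.Prime] {σ : ℤ_[p]}
    (hσNL : IsPAdicNonLiouville σ) {δ : ℝ} (hδ : 1 < δ) :
    ∃ C : ℝ, ∀ j : ℕ, (j : ℚ_[p]) + σ ≠ 0 → ‖(j : ℚ_[p]) + σ‖⁻¹ ≤ C * δ ^ j := by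
  obtain ⟨C, -, hC⟩ := hσNL δ hδ
  exact ⟨C, fun j => by simpa [add_comm] using hC j⟩

theorem stmt8_general {p : ℕ} [hp : Fact p.Prime] {K : Type*} [NormedField K]
    [NormedAlgebra ℚ_[p] K] {σ : K} (hσ : ∀ j : ℕ, 1 ≤ j → (j : K) + σ ≠ 0)
    (hσNL : ∀ δ : ℝ, 1 < δ → ∃ C : ℝ, ∀ j : ℕ, (j : K) + σ ≠ 0 → ‖(j : K) + σ‖⁻¹ ≤ C * δ ^ j)
    {ζ : ℝ} (hζ : (p : ℝ) ^ ((1 : ℝ) / ((p : ℝ) - 1)) < ζ) :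
    ∃ C : ℝ, 0 < C ∧ ∀ l : ℕ, ‖∏ j ∈ Finset.Icc 1 l, ((j : K) + σ)‖⁻¹ ≤ C * ζ ^ l := by
  have hp1 : (1 : ℝ) < p := mod_cast hp.out.one_lt
  set r : ℝ := (p : ℝ) ^ ((1 : ℝ) / ((p : ℝ) - 1))
  have hr : 1 ≤ r := Real.one_le_rpow hp1.le (one_div_nonneg.2 (sub_nonneg.2 hp1.le))
  have hr0 : 0 < r := one_pos.trans_le hr
  have hδ : 1 < ζ / r := (one_lt_div hr0).2 hζ
  obtain ⟨C, hC⟩ := hσNL (ζ / r) hδ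
  refine ⟨max C 1, by positivity, fun l => ?_⟩
  obtain _ | n := l
  · simp
  have hM : ∀ j ∈ Finset.Icc 1 (n + 1), ‖(j : K) + σ‖⁻¹ ≤ max C 1 * (ζ / r) ^ (n + 1) := by
    intro j hj
    obtain ⟨hj1, hjn⟩ := Finset.mem_Icc.1 hj
    refine (hC j (hσ j hj1)).trans ?_
    gcongr
    exacts [le_max_left C 1, hδ.le]
  calc ‖∏ j ∈ Finset.Icc 1 (n + 1), ((j : K) + σ)‖⁻¹
      ≤ max C 1 * (ζ / r) ^ (n + 1) * r ^ n :=
        inv_norm_prod_Icc_natCast_add_le (fun j hj => hσ j (Finset.mem_Icc.1 hj).1) hM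
    _ ≤ max C 1 * (ζ / r) ^ (n + 1) * r ^ (n + 1) := by
        have : 0 < ζ / r := one_pos.trans hδ
        gcongr
        exact n.le_succ
    _ = max C 1 * ζ ^ (n + 1) := by
        rw [mul_assoc, ← mul_pow, div_mul_cancel₀ ζ hr0.ne']

/-- **Radius of convergence estimate used in Lemma 3.4.1 and Proposition 3.5.3.**
If `σ ∈ ℤ_p` is `p`-adically non-Liouville and either `0` or not a rational integer,
then for every real `ζ > p^{1/(p-1)}` there is `C > 0` such that
`|∏_{j=1}^l (j + σ)|_p⁻¹ ≤ C ζ^l` for all `l ∈ ℕ`. -/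
theorem stmt8 (p : ℕ) [Fact p.Prime] (σ : ℤ_[p])
    (hσNL : IsPAdicNonLiouville σ)
    (hσ : σ = 0 ∨ ∀ i : ℤ, (σ : ℚ_[p]) ≠ (i : ℚ_[p])) :
    ∀ ζ : ℝ, (p : ℝ) ^ ((1 : ℝ) / ((p : ℝ) - 1)) < ζ → ∃ C : ℝ, 0 < C ∧
      ∀ l : ℕ, ‖∏ j ∈ Finset.Icc 1 l, ((j : ℚ_[p]) + (σ : ℚ_[p]))‖⁻¹ ≤ C * ζ ^ l := by
  have hσ_cast : (σ : ℚ_[p]) = 0 ∨ ∀ i : ℤ, (σ : ℚ_[p]) ≠ i := hσ.imp_left (by simp [·])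
  exact fun ζ => stmt8_general
    (fun j => natCast_add_ne_zero_of_eq_zero_or_forall_ne_intCast hσ_cast)
    fun δ => hσNL.exists_inv_norm_natCast_add_le
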